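/- Let T be a finite rooted planar binary tree with h ≥ 2 leaves, a = (a_1,…,a_h) a composition of n, and T_r(k) a representation labeling of T with root label k. For all integers r, m with k ≤ m ≤ r ≤ n−k: R_{r−m} Φ(T(a), m, T_r(k)) = C(r−k, m−k)·Φ(T(a), r, T_r(k)). -/

import Mathlib

/-! The identity is the `q`-fold iterate of a one-step recurrence `d* Φ_m = (m + 1 - k) Φ_{m+1}`
(`adjoint_PhiT`), because `q! R_q = (d*)^q`; see `sum_powersetCard_PhiT`.

The one-step recurrence is proved by induction on the tree. On a tensor product `d*` acts by the
Leibniz rule, so at a vertex with sons labelled `i, j` it reduces, through the inductive hypothesis,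
to a contiguity relation for the coefficients. With `K = k - i - j`, the Hahn polynomial is written
in the symmetric form `hahnG K a b x y`, where `y = c - x`; the relation is
`y G(x, y-1) + x G(x-1, y) = (x + y - K) G(x, y)`, and it holds termwise (`hahnG_contiguity`).

The ranges of summation in the definition of `Φ` require care at their end points. They disappear
once it is known that `Φ_m` vanishes identically for `m < k` and for `m > n - k`
(`PhiT_support`): then `Φ_m(Z)` is a single product for every `Z` (`PhiT_node_eq`). The vanishing
below `k` is termwise; above `n - k` it says that `G(a - p, b - q) = 0` when `p + q < K`
(`hahnG_eq_zero_of_large`), and there `G` is, up to a factor, the `K`-th finite difference of a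
polynomial of degree at most `p + q`. -/

open Finset

noncomputable section

/-- The Radon transform `d : M^{n-m,m} → M^{n-m+1,m-1}`, `(df)(B) = ∑_{x ∉ B} f(B ∪ {x})`. -/
def dR (n : ℕ) (f : Finset (Fin n) → ℂ) : Finset (Fin n) → ℂ :=
  fun B => ∑ x ∈ Bᶜ, f (insert x B)

/-- The adjoint Radon transform `d* : M^{n-m,m} → M^{n-m-1,m+1}`. -/
def dS (n : ℕ) (f : Finset (Fin n) → ℂ) : Finset (Fin n) → ℂ :=
  fun B => ∑ x ∈ B, f (B.erase x)

/-- `R_q = (d*)^q / q!`, i.e. `(R_q f)(B) = ∑_{A ⊆ B, |A| = |B| - q} f(A)`. -/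
def RT (n q : ℕ) (f : Finset (Fin n) → ℂ) : Finset (Fin n) → ℂ :=
  fun B => if q ≤ B.card then ∑ A ∈ B.powersetCard (B.card - q), f A else 0

/-- Pochhammer symbol `(t)_p = t(t+1)⋯(t+p-1)`. -/
def poch (t : ℤ) (p : ℕ) : ℤ := ∏ i ∈ Finset.range p, (t + i)

/-- Dunkl-normalized Hahn polynomial value `E_m(a,b,c,x)`. -/
def hahnE (m : ℕ) (a b c x : ℤ) : ℤ :=
  ∑ j ∈ Finset.Icc (max 0 (x - c + m)) (min (m : ℤ) x),
    (-1) ^ j.toNat * (m.choose j.toNat : ℤ) * poch (b - m + 1) j.toNat * poch (-x) j.toNat *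
      poch (a - m + 1) (m - j.toNat) * poch (x - c) (m - j.toNat)

/-- Inner product `⟨f, g⟩ = ∑ f(s) conj (g s)`. -/
def ip (n : ℕ) (f g : Finset (Fin n) → ℂ) : ℂ :=
  ∑ s : Finset (Fin n), f s * (starRingEnd ℂ) (g s)

/-- Action of `S_n`: `(g · f)(ω) = f (g⁻¹ ω)`. -/
def permAct (n : ℕ) (g : Equiv.Perm (Fin n)) (f : Finset (Fin n) → ℂ) :
    Finset (Fin n) → ℂ :=
  fun s => f (s.image ⇑g⁻¹)

/-- The block `{o+1, …, o+a}` of the ground set `{1, …, n}` (0-indexed: positions `o ≤ x < o+a`). -/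
def block (n o a : ℕ) : Finset (Fin n) :=
  Finset.filter (fun x => o ≤ (x : ℕ) ∧ (x : ℕ) < o + a) Finset.univ

/-- Tensor product relative to the partition `A = {1,…,h}`, `B = {h+1,…,n}`:
`(φ ⊗ ψ)(Z) = φ(Z ∩ A) · ψ(Z ∩ B)`. -/
def tens (n h : ℕ) (φ ψ : Finset (Fin n) → ℂ) : Finset (Fin n) → ℂ :=
  fun Z => φ (Z ∩ block n 0 h) * ψ (Z ∩ block n h (n - h))

/-- A finite rooted planar binary tree, carrying at each leaf a composition part and at each
internal vertex a representation label. -/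
inductive BT where
  | leaf (a : ℕ) : BT
  | node (κ : ℕ) (l r : BT) : BT

/-- The sum of the composition labels of a (sub)tree. -/
def BT.size : BT → ℕ
  | .leaf a => a
  | .node _ l r => l.size + r.size

/-- The representation label at the root (0 at a leaf). -/
def BT.rlabel : BT → ℕ
  | .leaf _ => 0
  | .node κ _ _ => κ

/-- Number of leaves. -/
def BT.nleaves : BT → ℕ
  | .leaf _ => 1
  | .node _ l r => l.nleaves + r.nleaves

/-- All composition parts are positive. -/
def BT.posParts : BT → Prop
  | .leaf a => 0 < a
  | .node _ l r => l.posParts ∧ r.posParts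

/-- Validity of a representation labeling: at each internal vertex with label `κ`, whose
composition label has sum `N` and whose sons carry labels `i`, `j` (composition sums `t`,
`N - t`), one has `κ - t ≤ j - i ≤ N - t - κ` and `i + j ≤ κ`; leaves carry label `0`. -/
def BT.valid : BT → Prop
  | .leaf _ => True
  | .node κ l r => l.valid ∧ r.valid ∧
      (κ : ℤ) - l.size ≤ (r.rlabel : ℤ) - l.rlabel ∧
      (r.rlabel : ℤ) - l.rlabel ≤ (r.size : ℤ) - κ ∧
      l.rlabel + r.rlabel ≤ κ

/-- Same underlying planar tree and same composition labels at the leaves. -/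
def sameShape : BT → BT → Prop
  | .leaf a, .leaf b => a = b
  | .node _ l r, .node _ l' r' => sameShape l l' ∧ sameShape r r'
  | _, _ => False

/-- The intertwining function `Φ(T(a), m, T_r(k))`, for the subtree occupying the block of
size `size` starting at offset `o` in `{1,…,n}`. -/
def PhiT (n : ℕ) : BT → ℕ → ℕ → Finset (Fin n) → ℂ
  | .leaf a, o, m => fun Z => if Z ⊆ block n o a ∧ Z.card = m then 1 else 0
  | .node κ l r, o, m => fun Z =>
      ∑ w ∈ Finset.Icc (max r.rlabel (l.rlabel + m - l.size))
          (min (r.size - r.rlabel) (m - l.rlabel)),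
        ((hahnE (κ - l.rlabel - r.rlabel) ((r.size : ℤ) - 2 * r.rlabel)
            ((l.size : ℤ) - 2 * l.rlabel) ((m : ℤ) - l.rlabel - r.rlabel)
            ((w : ℤ) - r.rlabel) : ℤ) : ℂ) *
          PhiT n l o (m - w) (Z ∩ block n o l.size) *
          PhiT n r (o + l.size) w (Z ∩ block n (o + l.size) r.size)

/-- `g ∈ S_n` preserves every block of the composition carried by the tree. -/
def presBlocks (n : ℕ) : BT → ℕ → Equiv.Perm (Fin n) → Prop
  | .leaf a, o, g => Finset.image ⇑g (block n o a) = block n o a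
  | .node _ l r, o, g => presBlocks n l o g ∧ presBlocks n r (o + l.size) g

/-! ### Pochhammer symbols -/

lemma poch_succ (t : ℤ) (p : ℕ) : poch t (p + 1) = poch t p * (t + p) := by
  simp [poch, Finset.prod_range_succ]

lemma poch_add (t : ℤ) (p q : ℕ) : poch t (p + q) = poch t p * poch (t + p) q := by
  simp only [poch, Finset.prod_range_add]
  congr 1
  apply Finset.prod_congr rfl
  intro i _
  push_cast
  ring

lemma poch_add_one (y : ℤ) (k : ℕ) : y * poch (-(y - 1)) k = (y - k) * poch (-y) k := by
  have h1 := poch_succ (-y) k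
  have h2 := poch_add (-y) 1 k
  have h3 : poch (-y) 1 = -y := by simp [poch]
  rw [add_comm 1 k, h1, h3] at h2
  have h4 : -(y - 1) = -y + ((1 : ℕ) : ℤ) := by push_cast; ring
  rw [h4]
  linarith

lemma poch_neg_eq_zero (x k : ℕ) (h : x < k) : poch (-(x : ℤ)) k = 0 := by
  apply Finset.prod_eq_zero (Finset.mem_range.2 h)
  simp

lemma poch_neg (x : ℤ) (k : ℕ) : poch (-x) k = (-1) ^ k * poch (x - k + 1) k := by
  unfold poch
  rw [← Finset.prod_range_reflect (fun i : ℕ => x - k + 1 + (i : ℤ))]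
  have hs : (-1 : ℤ) ^ k = ∏ _i ∈ Finset.range k, (-1 : ℤ) := by simp
  rw [hs, ← Finset.prod_mul_distrib]
  apply Finset.prod_congr rfl
  intro i hi
  have := Finset.mem_range.1 hi
  rw [Nat.sub_sub, Nat.cast_sub (by omega)]
  push_cast
  ring

/-- Two ways of covering the same multiset of integers by two runs of consecutive integers. -/
lemma poch_swap (a : ℤ) (p j K : ℕ) (hp : p ≤ K) (hj : j ≤ K) :
    poch (a - p - j + 1) j * poch (a - K + 1) (K - j) =
      poch (a - K + 1) (K - p) * poch (a - p - j + 1) p := by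
  rcases le_total (j + p) K with h | h
  · obtain ⟨e, rfl⟩ := Nat.exists_eq_add_of_le h
    have e1 : j + p + e - j = e + p := by omega
    have e2 : j + p + e - p = e + j := by omega
    rw [e1, e2, poch_add, poch_add]
    have e3 : a - ((j + p + e : ℕ) : ℤ) + 1 + e = a - p - j + 1 := by push_cast; ring
    rw [e3]
    ring
  · obtain ⟨e, he⟩ := Nat.exists_eq_add_of_le h
    obtain ⟨f, rfl⟩ := Nat.exists_eq_add_of_le hp
    obtain ⟨g, hg⟩ := Nat.exists_eq_add_of_le hj
    obtain rfl : j = e + f := by omega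
    obtain rfl : p = e + g := by omega
    have e1 : e + g + f - (e + f) = g := by omega
    have e2 : e + g + f - (e + g) = f := by omega
    rw [e1, e2, poch_add _ e f, poch_add _ e g]
    have e3 : a - ((e + g : ℕ) : ℤ) - ((e + f : ℕ) : ℤ) + 1 + e
        = a - ((e + g + f : ℕ) : ℤ) + 1 := by push_cast; ring
    rw [e3]
    ring

/-! ### The symmetric form of the Hahn polynomial -/

/-- The Hahn polynomial `E_K(a, b, x + y, x)`, as a function of the two variables `x` and
`y = c - x`, with the summation extended over all `0 ≤ j ≤ K`. -/
def hahnG (K : ℕ) (a b x y : ℤ) : ℤ :=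
  ∑ j ∈ Finset.range (K + 1),
    (-1) ^ j * (K.choose j : ℤ) * poch (b - K + 1) j * poch (-x) j *
      poch (a - K + 1) (K - j) * poch (-y) (K - j)

lemma hahnE_eq_hahnG (K : ℕ) (a b : ℤ) (x y : ℕ) :
    hahnE K a b ((x : ℤ) + y) x = hahnG K a b x y := by
  unfold hahnE hahnG
  apply Finset.sum_of_injOn Int.toNat
  · intro u hu v hv huv
    simp only [Finset.coe_Icc, Set.mem_Icc] at hu hv
    omega
  · intro u hu
    simp only [Finset.coe_Icc, Set.mem_Icc, Finset.coe_range, Set.mem_Iio] at hu ⊢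
    omega
  · intro j hj hj'
    rw [Finset.mem_range] at hj
    -- the omitted terms contain a vanishing Pochhammer symbol
    by_cases h1 : x < j
    · rw [poch_neg_eq_zero x j h1]; ring
    by_cases h2 : y < K - j
    · rw [poch_neg_eq_zero y (K - j) h2]; ring
    exfalso
    apply hj'
    refine ⟨(j : ℤ), ?_, by simp⟩
    simp only [Finset.coe_Icc, Set.mem_Icc]
    omega
  · intro j _
    have : (x : ℤ) - (x + y) = -y := by ring
    rw [this]

lemma hahnG_contiguity (K : ℕ) (a b x y : ℤ) :
    y * hahnG K a b x (y - 1) + x * hahnG K a b (x - 1) y = (x + y - K) * hahnG K a b x y := by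
  unfold hahnG
  rw [Finset.mul_sum, Finset.mul_sum, Finset.mul_sum, ← Finset.sum_add_distrib]
  apply Finset.sum_congr rfl
  intro j hj
  have hj' : j ≤ K := by have := Finset.mem_range.1 hj; omega
  have h1 := poch_add_one y (K - j)
  have h2 := poch_add_one x j
  rw [Nat.cast_sub hj'] at h1
  linear_combination
    ((-1) ^ j * (K.choose j : ℤ) * poch (b - K + 1) j * poch (-x) j * poch (a - K + 1) (K - j)) * h1
    + ((-1) ^ j * (K.choose j : ℤ) * poch (b - K + 1) j * poch (a - K + 1) (K - j)
      * poch (-y) (K - j)) * h2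

lemma hahnG_eq_zero_of_small (K : ℕ) (a b : ℤ) (x y : ℕ) (h : x + y < K) :
    hahnG K a b x y = 0 := by
  apply Finset.sum_eq_zero
  intro j hj
  rw [Finset.mem_range] at hj
  by_cases h1 : x < j
  · rw [poch_neg_eq_zero x j h1]; ring
  · rw [poch_neg_eq_zero y (K - j) (by omega)]; ring

open Polynomial in
/-- The `K`-th finite difference annihilates polynomials of degree less than `K`. -/
lemma sum_alternating_poch (K p q : ℕ) (u v : ℤ) (h : p + q < K) :
    ∑ j ∈ Finset.range (K + 1), (-1 : ℤ) ^ (K - j) * (K.choose j : ℤ) *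
      (poch (u - j) p * poch (v + j) q) = 0 := by
  let P : ℤ[X] := (∏ i ∈ Finset.range p, (C (u + i) - X)) * ∏ i ∈ Finset.range q, (X + C (v + i))
  have hdeg : P.natDegree < K := by
    refine lt_of_le_of_lt natDegree_mul_le (lt_of_le_of_lt (add_le_add ?_ ?_) h)
    · refine (natDegree_prod_le _ _).trans ((Finset.sum_le_card_nsmul _ _ 1 ?_).trans (by simp))
      intro i _
      refine (natDegree_sub_le _ _).trans ?_
      rw [natDegree_C, natDegree_X]
      simp
    · refine (natDegree_prod_le _ _).trans ((Finset.sum_le_card_nsmul _ _ 1 ?_).trans (by simp))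
      intro i _
      rw [natDegree_X_add_C]
  have h0 := congrFun (Polynomial.fwdDiff_iter_eq_zero_of_degree_lt hdeg) 0
  rw [fwdDiff_iter_eq_sum_shift] at h0
  rw [Pi.zero_apply] at h0
  rw [← h0]
  apply Finset.sum_congr rfl
  intro j _
  have hP : P.eval (0 + j • (1 : ℤ)) = poch (u - j) p * poch (v + j) q := by
    simp only [P, eval_mul, eval_prod, eval_sub, eval_add, eval_C, eval_X, poch]
    congr 1 <;>
    · apply Finset.prod_congr rfl
      intro i _
      simp only [nsmul_eq_mul, mul_one, zero_add]
      ring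
  rw [hP, smul_eq_mul]

lemma hahnG_eq_zero_of_large (K p q : ℕ) (a b : ℤ) (h : p + q < K) :
    hahnG K a b (a - p) (b - q) = 0 := by
  have key := sum_alternating_poch K p q (a - p + 1) (b - q - K + 1) h
  have : hahnG K a b (a - p) (b - q) = poch (a - K + 1) (K - p) * poch (b - K + 1) (K - q) *
      ∑ j ∈ Finset.range (K + 1), (-1 : ℤ) ^ (K - j) * (K.choose j : ℤ) *
      (poch (a - p + 1 - j) p * poch (b - q - K + 1 + j) q) := by
    unfold hahnG
    rw [Finset.mul_sum]
    apply Finset.sum_congr rfl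
    intro j hj
    have hj' : j ≤ K := by have := Finset.mem_range.1 hj; omega
    rw [poch_neg (a - p) j, poch_neg (b - q) (K - j)]
    have h1 := poch_swap a p j K (by omega) hj'
    have h2 := poch_swap b q (K - j) K (by omega) (by omega)
    rw [Nat.sub_sub_self hj', Nat.cast_sub hj'] at h2
    rw [Nat.cast_sub hj']
    have e1 : a - p + 1 - (j : ℤ) = a - p - j + 1 := by ring
    have e2 : b - q - (K : ℤ) + 1 + j = b - q - (K - j) + 1 := by ring
    have hs : (-1 : ℤ) ^ j * (-1) ^ j = 1 := by rw [← mul_pow]; simp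
    rw [e1, e2]
    calc _ = ((-1 : ℤ) ^ j * (-1) ^ j) * (-1) ^ (K - j) * (K.choose j : ℤ) *
          (poch (a - p - j + 1) j * poch (a - K + 1) (K - j)) *
          (poch (b - q - (K - j) + 1) (K - j) * poch (b - K + 1) j) := by ring
      _ = _ := by rw [h1, h2, hs]; ring
  rw [this, key, mul_zero]

/-! ### Blocks -/

lemma card_block_le (n o a : ℕ) : (block n o a).card ≤ a := by
  have : (block n o a).card ≤ (Finset.Ico o (o + a)).card := by
    apply Finset.card_le_card_of_injOn Fin.val
    · intro x hx
      simpa [block] using hx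
    · exact Fin.val_injective.injOn
  simpa using this

lemma block_union (n o s t : ℕ) : block n o (s + t) = block n o s ∪ block n (o + s) t := by
  ext x
  simp only [block, Finset.mem_filter, Finset.mem_univ, true_and, Finset.mem_union]
  omega

lemma block_disjoint (n o s t : ℕ) : Disjoint (block n o s) (block n (o + s) t) := by
  rw [Finset.disjoint_left]
  intro x
  simp only [block, Finset.mem_filter, Finset.mem_univ, true_and]
  omega

lemma inter_disjoint (n o s t : ℕ) (Z : Finset (Fin n)) :
    Disjoint (Z ∩ block n o s) (Z ∩ block n (o + s) t) :=
  (block_disjoint n o s t).mono Finset.inter_subset_right Finset.inter_subset_right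

lemma inter_union_inter (n o s t : ℕ) (Z : Finset (Fin n)) (hZ : Z ⊆ block n o (s + t)) :
    (Z ∩ block n o s) ∪ (Z ∩ block n (o + s) t) = Z := by
  rw [← Finset.inter_union_distrib_left, ← block_union]
  exact Finset.inter_eq_left.2 hZ

lemma card_inter_add (n o s t : ℕ) (Z : Finset (Fin n)) (hZ : Z ⊆ block n o (s + t)) :
    (Z ∩ block n o s).card + (Z ∩ block n (o + s) t).card = Z.card := by
  rw [← Finset.card_union_of_disjoint (inter_disjoint n o s t Z), inter_union_inter n o s t Z hZ]

/-! ### Support and product form of the intertwining functions -/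

/-- `Φ_m` is supported on `m`-subsets, and vanishes unless `k ≤ m ≤ N - k`. -/
def GoodSupport (n : ℕ) (t : BT) : Prop :=
  ∀ (o m : ℕ) (Z : Finset (Fin n)), Z ⊆ block n o t.size → PhiT n t o m Z ≠ 0 →
    Z.card = m ∧ t.rlabel ≤ m ∧ m + t.rlabel ≤ t.size

lemma PhiT_node_eq_of_support (n κ : ℕ) (l r : BT) (hl : GoodSupport n l) (hr : GoodSupport n r)
    (o m : ℕ) (Z : Finset (Fin n)) :
    PhiT n (.node κ l r) o m Z =
      if (Z ∩ block n o l.size).card + (Z ∩ block n (o + l.size) r.size).card = m then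
        (hahnG (κ - l.rlabel - r.rlabel) ((r.size : ℤ) - 2 * r.rlabel) ((l.size : ℤ) - 2 * l.rlabel)
          (((Z ∩ block n (o + l.size) r.size).card : ℤ) - r.rlabel)
          (((Z ∩ block n o l.size).card : ℤ) - l.rlabel) : ℂ) *
        PhiT n l o (Z ∩ block n o l.size).card (Z ∩ block n o l.size) *
        PhiT n r (o + l.size) (Z ∩ block n (o + l.size) r.size).card
          (Z ∩ block n (o + l.size) r.size)
      else 0 := by
  rw [PhiT]
  beta_reduce
  have hl' := fun m' => hl o m' (Z ∩ block n o l.size) Finset.inter_subset_right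
  have hr' := fun m' => hr (o + l.size) m' (Z ∩ block n (o + l.size) r.size)
    Finset.inter_subset_right
  generalize Z ∩ block n o l.size = X at *
  generalize Z ∩ block n (o + l.size) r.size = Y at *
  -- a summand whose tensor factors are both nonzero has the index `w = |Y|`
  have hterm : ∀ w ∈ Finset.Icc (max r.rlabel (l.rlabel + m - l.size))
          (min (r.size - r.rlabel) (m - l.rlabel)),
      PhiT n l o (m - w) X ≠ 0 → PhiT n r (o + l.size) w Y ≠ 0 → w = Y.card ∧ X.card + Y.card = m := by
    intro w hw h1 h2
    rw [Finset.mem_Icc] at hw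
    have := hl' _ h1
    have := hr' _ h2
    omega
  split_ifs with hm
  · by_cases hX : PhiT n l o X.card X = 0
    · rw [hX, mul_zero, zero_mul]
      apply Finset.sum_eq_zero
      intro w hw
      by_contra hne
      simp only [mul_eq_zero, not_or] at hne
      obtain ⟨rfl, h⟩ := hterm w hw hne.1.2 hne.2
      apply hne.1.2
      rwa [← h, Nat.add_sub_cancel]
    by_cases hY : PhiT n r (o + l.size) Y.card Y = 0
    · rw [hY, mul_zero]
      apply Finset.sum_eq_zero
      intro w hw
      by_contra hne
      simp only [mul_eq_zero, not_or] at hne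
      obtain ⟨rfl, h⟩ := hterm w hw hne.1.2 hne.2
      exact hne.2 hY
    have bX := hl' _ hX
    have bY := hr' _ hY
    rw [Finset.sum_eq_single Y.card]
    · have e1 : m - Y.card = X.card := by omega
      rw [e1]
      congr 3
      obtain ⟨x, hx⟩ := Nat.exists_eq_add_of_le bY.2.1
      obtain ⟨y, hy⟩ := Nat.exists_eq_add_of_le bX.2.1
      have e2 : (Y.card : ℤ) - r.rlabel = x := by omega
      have e3 : (X.card : ℤ) - l.rlabel = y := by omega
      have e4 : (m : ℤ) - l.rlabel - r.rlabel = x + y := by omega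
      rw [e2, e3, e4, hahnE_eq_hahnG]
    · intro w hw hne
      by_contra hne'
      simp only [mul_eq_zero, not_or] at hne'
      exact hne (hterm w hw hne'.1.2 hne'.2).1
    · intro hY'
      exfalso
      apply hY'
      rw [Finset.mem_Icc]
      omega
  · apply Finset.sum_eq_zero
    intro w hw
    by_contra hne
    simp only [mul_eq_zero, not_or] at hne
    exact hm (hterm w hw hne.1.2 hne.2).2

lemma PhiT_support (n : ℕ) (t : BT) (hv : t.valid) : GoodSupport n t := by
  induction t with
  | leaf a =>
    intro o m Z hZ h
    rw [PhiT] at h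
    simp only [ne_eq, ite_eq_right_iff, one_ne_zero, imp_false, not_not] at h
    have := (Finset.card_le_card hZ).trans (card_block_le n o _)
    simp only [BT.rlabel]
    omega
  | node κ l r ihl ihr =>
    obtain ⟨hvl, hvr, h1, h2, h3⟩ := hv
    have hl := ihl hvl
    have hr := ihr hvr
    intro o m Z hZ h
    rw [PhiT_node_eq_of_support n κ l r hl hr] at h
    rw [ite_ne_right_iff] at h
    obtain ⟨hm, h⟩ := h
    simp only [ne_eq, mul_eq_zero, not_or] at h
    obtain ⟨⟨hG, hX⟩, hY⟩ := h
    have bX := hl _ _ _ Finset.inter_subset_right hX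
    have bY := hr _ _ _ Finset.inter_subset_right hY
    simp only [BT.size] at hZ
    have hc := card_inter_add n o l.size r.size Z hZ
    generalize (Z ∩ block n o l.size).card = X at *
    generalize (Z ∩ block n (o + l.size) r.size).card = Y at *
    simp only [BT.rlabel, BT.size]
    refine ⟨by omega, ?_, ?_⟩
    · by_contra hlt
      apply hG
      obtain ⟨x, hx⟩ := Nat.exists_eq_add_of_le bY.2.1
      obtain ⟨y, hy⟩ := Nat.exists_eq_add_of_le bX.2.1
      have e2 : (Y : ℤ) - r.rlabel = x := by omega
      have e3 : (X : ℤ) - l.rlabel = y := by omega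
      rw [e2, e3, hahnG_eq_zero_of_small _ _ _ _ _ (by omega), Int.cast_zero]
    · by_contra hlt
      apply hG
      obtain ⟨p, hp⟩ := Nat.exists_eq_add_of_le bY.2.2
      obtain ⟨q, hq⟩ := Nat.exists_eq_add_of_le bX.2.2
      have e2 : (Y : ℤ) - r.rlabel = (r.size : ℤ) - 2 * r.rlabel - p := by omega
      have e3 : (X : ℤ) - l.rlabel = (l.size : ℤ) - 2 * l.rlabel - q := by omega
      rw [e2, e3, hahnG_eq_zero_of_large _ _ _ _ _ (by omega), Int.cast_zero]

lemma PhiT_node_eq (n κ : ℕ) (l r : BT) (hl : l.valid) (hr : r.valid) (o m : ℕ)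
    (Z X Y : Finset (Fin n)) (hX : Z ∩ block n o l.size = X)
    (hY : Z ∩ block n (o + l.size) r.size = Y) (hm : X.card + Y.card = m) :
    PhiT n (.node κ l r) o m Z =
        (hahnG (κ - l.rlabel - r.rlabel) ((r.size : ℤ) - 2 * r.rlabel) ((l.size : ℤ) - 2 * l.rlabel)
          ((Y.card : ℤ) - r.rlabel) ((X.card : ℤ) - l.rlabel) : ℂ) *
        PhiT n l o X.card X * PhiT n r (o + l.size) Y.card Y := by
  subst hX hY
  rw [PhiT_node_eq_of_support n κ l r (PhiT_support n l hl) (PhiT_support n r hr), if_pos hm]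

/-! ### The adjoint Radon transform -/

/-- The identity `d* Φ_m = (m + 1 - k) Φ_{m+1}`, written at a set `X` of any cardinality; at
`X = ∅` it says that `k Φ_0(∅) = 0`. -/
lemma adjoint_PhiT_card (n : ℕ) (t : BT) (hv : t.valid) (o : ℕ)
    (step : ∀ (m : ℕ) (Z : Finset (Fin n)), Z ⊆ block n o t.size → Z.card = m + 1 →
      ∑ z ∈ Z, PhiT n t o m (Z.erase z) = ((m : ℂ) + 1 - t.rlabel) * PhiT n t o (m + 1) Z)
    (X : Finset (Fin n)) (hX : X ⊆ block n o t.size) :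
    ∑ z ∈ X, PhiT n t o (X.erase z).card (X.erase z) =
      ((X.card : ℂ) - t.rlabel) * PhiT n t o X.card X := by
  obtain hc | ⟨m, hc⟩ : X.card = 0 ∨ ∃ m, X.card = m + 1 := by
    rcases h : X.card with _ | m
    · exact Or.inl rfl
    · exact Or.inr ⟨m, rfl⟩
  · rw [hc]
    rw [Finset.card_eq_zero] at hc
    subst hc
    by_cases h : PhiT n t o 0 ∅ = 0
    · simp [h]
    · have := (PhiT_support n t hv o 0 ∅ hX h).2.1
      have h0 : t.rlabel = 0 := by omega
      simp [h0]
  · rw [hc]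
    push_cast
    rw [← step m X hX hc]
    apply Finset.sum_congr rfl
    intro z hz
    rw [Finset.card_erase_of_mem hz, hc, Nat.add_sub_cancel]

lemma adjoint_PhiT (n : ℕ) (t : BT) (hv : t.valid) (o m : ℕ) (Z : Finset (Fin n))
    (hZ : Z ⊆ block n o t.size) (hc : Z.card = m + 1) :
    ∑ z ∈ Z, PhiT n t o m (Z.erase z) = ((m : ℂ) + 1 - t.rlabel) * PhiT n t o (m + 1) Z := by
  induction t generalizing o m Z with
  | leaf a =>
    simp only [BT.size] at hZ
    have : ∀ z ∈ Z, PhiT n (.leaf a) o m (Z.erase z) = 1 := by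
      intro z hz
      rw [PhiT]
      beta_reduce
      rw [if_pos]
      refine ⟨(Finset.erase_subset _ _).trans hZ, ?_⟩
      rw [Finset.card_erase_of_mem hz]
      omega
    rw [Finset.sum_congr rfl this, PhiT]
    beta_reduce
    rw [if_pos ⟨hZ, hc⟩]
    simp [BT.rlabel, hc]
  | node κ l r ihl ihr =>
    obtain ⟨hvl, hvr, h1, h2, h3⟩ := hv
    simp only [BT.size] at hZ
    obtain ⟨X, hX⟩ : ∃ X, Z ∩ block n o l.size = X := ⟨_, rfl⟩
    obtain ⟨Y, hY⟩ : ∃ Y, Z ∩ block n (o + l.size) r.size = Y := ⟨_, rfl⟩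
    have hXb : X ⊆ block n o l.size := hX ▸ Finset.inter_subset_right
    have hYb : Y ⊆ block n (o + l.size) r.size := hY ▸ Finset.inter_subset_right
    have hcard := card_inter_add n o l.size r.size Z hZ
    have hdisj := inter_disjoint n o l.size r.size Z
    have hunion := inter_union_inter n o l.size r.size Z hZ
    rw [hX, hY] at hcard hdisj hunion
    have sX := adjoint_PhiT_card n l hvl o (fun m' Z' => ihl hvl o m' Z') X hXb
    have sY := adjoint_PhiT_card n r hvr (o + l.size) (fun m' Z' => ihr hvr (o + l.size) m' Z') Y hYb
    have hsplit : ∑ z ∈ Z, PhiT n (.node κ l r) o m (Z.erase z) =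
        ∑ z ∈ X, PhiT n (.node κ l r) o m (Z.erase z) +
        ∑ z ∈ Y, PhiT n (.node κ l r) o m (Z.erase z) := by
      rw [← Finset.sum_union hdisj, hunion]
    rw [hsplit, PhiT_node_eq n κ l r hvl hvr o (m + 1) Z X Y hX hY (by omega)]
    have hXsum : ∀ z ∈ X, PhiT n (.node κ l r) o m (Z.erase z) =
        (hahnG (κ - l.rlabel - r.rlabel) ((r.size : ℤ) - 2 * r.rlabel) ((l.size : ℤ) - 2 * l.rlabel)
          ((Y.card : ℤ) - r.rlabel) ((X.card : ℤ) - l.rlabel - 1) : ℂ) *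
        PhiT n l o (X.erase z).card (X.erase z) * PhiT n r (o + l.size) Y.card Y := by
      intro z hz
      have hzc := Finset.card_erase_add_one hz
      have hzY : z ∉ Y := Finset.disjoint_left.1 hdisj hz
      rw [PhiT_node_eq n κ l r hvl hvr o m (Z.erase z) (X.erase z) Y
        (by rw [Finset.erase_inter, hX]) (by rw [Finset.erase_inter, hY, Finset.erase_eq_of_notMem hzY])
        (by omega)]
      have e : ((X.erase z).card : ℤ) - l.rlabel = (X.card : ℤ) - l.rlabel - 1 := by omega
      rw [e]
    have hYsum : ∀ z ∈ Y, PhiT n (.node κ l r) o m (Z.erase z) =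
        (hahnG (κ - l.rlabel - r.rlabel) ((r.size : ℤ) - 2 * r.rlabel) ((l.size : ℤ) - 2 * l.rlabel)
          ((Y.card : ℤ) - r.rlabel - 1) ((X.card : ℤ) - l.rlabel) : ℂ) *
        PhiT n l o X.card X * PhiT n r (o + l.size) (Y.erase z).card (Y.erase z) := by
      intro z hz
      have hzc := Finset.card_erase_add_one hz
      have hzX : z ∉ X := Finset.disjoint_right.1 hdisj hz
      rw [PhiT_node_eq n κ l r hvl hvr o m (Z.erase z) X (Y.erase z)
        (by rw [Finset.erase_inter, hX, Finset.erase_eq_of_notMem hzX]) (by rw [Finset.erase_inter, hY])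
        (by omega)]
      have e : ((Y.erase z).card : ℤ) - r.rlabel = (Y.card : ℤ) - r.rlabel - 1 := by omega
      rw [e]
    rw [Finset.sum_congr rfl hXsum, Finset.sum_congr rfl hYsum, ← Finset.sum_mul, ← Finset.mul_sum,
      ← Finset.mul_sum, sX, sY]
    have hG := congrArg (Int.cast : ℤ → ℂ) (hahnG_contiguity (κ - l.rlabel - r.rlabel)
      ((r.size : ℤ) - 2 * r.rlabel) ((l.size : ℤ) - 2 * l.rlabel)
      ((Y.card : ℤ) - r.rlabel) ((X.card : ℤ) - l.rlabel))
    rw [Nat.sub_sub, Nat.cast_sub h3] at hG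
    rw [Nat.sub_sub]
    have hmc : (X.card : ℂ) + Y.card = m + 1 := by
      rw [hc] at hcard
      exact_mod_cast hcard
    have hκ : (BT.node κ l r).rlabel = κ := rfl
    rw [hκ]
    push_cast at hG ⊢
    rw [← hmc]
    linear_combination (PhiT n l o X.card X * PhiT n r (o + l.size) Y.card Y) * hG

/-- Each `m`-subset of an `(m + q + 1)`-set `Z` lies in `Z \ {z}` for exactly `q + 1` elements
`z`. -/
lemma sum_powersetCard_erase {n : ℕ} (f : Finset (Fin n) → ℂ) (m q : ℕ) (Z : Finset (Fin n))
    (hZ : Z.card = m + (q + 1)) :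
    ∑ z ∈ Z, ∑ A ∈ (Z.erase z).powersetCard m, f A =
      ((q : ℂ) + 1) * ∑ A ∈ Z.powersetCard m, f A := by
  have h : ∑ z ∈ Z, ∑ A ∈ (Z.erase z).powersetCard m, f A =
      ∑ A ∈ Z.powersetCard m, ∑ _z ∈ Z \ A, f A := by
    apply Finset.sum_comm'
    intro z A
    simp only [Finset.mem_powersetCard, Finset.subset_erase, Finset.mem_sdiff]
    tauto
  rw [h, Finset.mul_sum]
  apply Finset.sum_congr rfl
  intro A hA
  rw [Finset.mem_powersetCard] at hA
  rw [Finset.sum_const, Finset.card_sdiff_of_subset hA.1, hA.2, hZ, Nat.add_sub_cancel_left]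
  simp

lemma sum_powersetCard_PhiT (n : ℕ) (t : BT) (hv : t.valid) (o m q : ℕ) (hm : t.rlabel ≤ m)
    (Z : Finset (Fin n)) (hZ : Z ⊆ block n o t.size) (hc : Z.card = m + q) :
    ∑ A ∈ Z.powersetCard m, PhiT n t o m A =
      ((m + q - t.rlabel).choose (m - t.rlabel) : ℂ) * PhiT n t o (m + q) Z := by
  induction q generalizing Z with
  | zero =>
    rw [add_zero] at hc
    subst hc
    simp
  | succ q ih =>
    have h1 := sum_powersetCard_erase (PhiT n t o m) m q Z hc
    have h2 : ∀ z ∈ Z, ∑ A ∈ (Z.erase z).powersetCard m, PhiT n t o m A =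
        ((m + q - t.rlabel).choose (m - t.rlabel) : ℂ) * PhiT n t o (m + q) (Z.erase z) := by
      intro z hz
      apply ih _ ((Finset.erase_subset _ _).trans hZ)
      rw [Finset.card_erase_of_mem hz]
      omega
    rw [Finset.sum_congr rfl h2, ← Finset.mul_sum,
      adjoint_PhiT n t hv o (m + q) Z hZ (by omega)] at h1
    obtain ⟨e, rfl⟩ := Nat.exists_eq_add_of_le hm
    have e1 : t.rlabel + e + q - t.rlabel = e + q := by omega
    have e2 : t.rlabel + e + (q + 1) - t.rlabel = e + q + 1 := by omega
    have e3 : t.rlabel + e - t.rlabel = e := by omega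
    rw [e1, e3] at h1
    rw [e2, e3]
    have hch : ((e + q + 1 : ℕ) : ℂ) * (e + q).choose e = ((e + q + 1).choose e : ℂ) * (q + 1) := by
      have h := Nat.add_one_mul_choose_eq (e + q) q
      have s1 : (e + q).choose q = (e + q).choose e := (Nat.choose_symm_add).symm
      have s2 : (e + q + 1).choose (q + 1) = (e + q + 1).choose e :=
        (Nat.choose_symm_add (a := e) (b := q + 1)).symm
      rw [s1, s2] at h
      exact_mod_cast h
    have hq : (q : ℂ) + 1 ≠ 0 := Nat.cast_add_one_ne_zero q
    apply mul_left_cancel₀ hq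
    rw [← h1, ← add_assoc]
    push_cast at hch ⊢
    linear_combination (PhiT n t o (t.rlabel + e + q + 1) Z) * hch

/-- Lemma 3.6: `R_{r-m} Φ(T(a), m, T_r(k)) = C(r-k, m-k) · Φ(T(a), r, T_r(k))`. -/
theorem stmt11 (n : ℕ) (hn : 1 ≤ n) (t : BT) (hleaves : 2 ≤ t.nleaves)
    (hsize : t.size = n) (hpos : t.posParts) (hvalid : t.valid)
    (m r : ℕ) (hkm : t.rlabel ≤ m) (hmr : m ≤ r) (hrn : r ≤ n - t.rlabel)
    (Z : Finset (Fin n)) (hZ : Z.card = r) :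
    RT n (r - m) (PhiT n t 0 m) Z =
      ((r - t.rlabel).choose (m - t.rlabel) : ℂ) * PhiT n t 0 r Z := by
  have hZb : Z ⊆ block n 0 t.size := by
    intro x _
    simp only [block, Finset.mem_filter, Finset.mem_univ, true_and]
    omega
  have h := sum_powersetCard_PhiT n t hvalid 0 m (r - m) hkm Z hZb (by omega)
  rw [Nat.add_sub_of_le hmr] at h
  have e : Z.card - (r - m) = m := by omega
  rw [RT, if_pos (by omega), e, h]
end
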